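/- Corollary (information versus error probability): For every attack E and every POVM X = (X_α)_{α ∈ A} on ℂ^M, setting δ := ∑_{c ∈ I, c ≠ 0} p̄(c), Eve's information gain satisfies I(A:E[X]|b) ≤ −δ log₂ δ − (1−δ) log₂ (1−δ) + N·δ. -/

import Mathlib

/-!
Factor each POVM element as `X_α = T_α* T_α` and put `v_{α,m,k}(i) = 2^{-N/2} (T_α E i (i ⊕ k))_m`.
Then `p(i, α) = ∑_{m,k} |v_{α,m,k}(i)|²`, while `p̄(c) = ∑_{α,m,k} |v̂_{α,m,k}(c)|²`, where `v̂` is the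
normalised Walsh–Hadamard transform in `i` (`pbar_eq`). So Eve's knowledge of `i` and Bob's
conjugate-basis error are governed by complementary measurements of one `N`-qubit register, and the
bound is an entropic uncertainty relation.

Write `Φ(q)` for the entropy of an unnormalised family `q` (`Phi`). Since the marginal of `i` is
uniform, `I = N log 2 - ∑_α Φ(p(·, α))` in nats. Concavity of entropy (`sum_Phi_le`) gives
`∑_α Φ(p(·, α)) ≥ ∑ Φ(|v|²)` and `Φ(p̄) ≥ ∑ Φ(|v̂|²)`, and Hirschman's inequality
`Φ(|v|²) + Φ(|v̂|²) ≥ N log 2 · ∑ |v|²` (`hirschman`) yields `I ≤ Φ(p̄)`, the entropy of `p̄`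
(`info_le`). Fano's inequality (`fano`) bounds the latter by the claimed expression.

Hirschman's inequality for `ℤ₂^N` follows by induction on `N` from the chain rule, concavity, and the
case of one qubit (`two_point`), which rests on the bound `h(x) ≥ 4 x (1 - x)` for the binary entropy
in bits (`four_log_two_mul_le_binEntropy`).
-/

open scoped ComplexInnerProductSpace ComplexOrder
open Finset

namespace IDT

/-- N-bit strings. -/
abbrev Bits (N : ℕ) := Fin N → ZMod 2

/-- Bitwise dot product `i·k := ∑ n i_n k_n` (lifting bits to naturals). -/
def bdot {N : ℕ} (i k : Bits N) : ℕ := ∑ n, (i n).val * (k n).val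

/-- Eve's attack: unitarity condition on the family of vectors. -/
def Attack {N M : ℕ} (E : Bits N → Bits N → EuclideanSpace ℂ (Fin M)) : Prop :=
  ∀ i k : Bits N, (∑ j : Bits N, ⟪E i j, E k j⟫) = if i = k then 1 else 0

/-- Conjugate-basis vectors `Ē l s := 2^{-N} ∑_{i,j} (-1)^{s·j + i·l} E i j`. -/
noncomputable def Ebar {N M : ℕ} (E : Bits N → Bits N → EuclideanSpace ℂ (Fin M))
    (l s : Bits N) : EuclideanSpace ℂ (Fin M) :=
  (2 ^ N : ℂ)⁻¹ • ∑ i : Bits N, ∑ j : Bits N, ((-1 : ℂ) ^ (bdot s j + bdot i l)) • E i j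

/-- Error distribution of Bob's conjugate-basis outcome. -/
noncomputable def pbar {N M : ℕ} (E : Bits N → Bits N → EuclideanSpace ℂ (Fin M))
    (c : Bits N) : ℝ :=
  (2 ^ N : ℝ)⁻¹ * ∑ i : Bits N, ‖Ebar E i (i + c)‖ ^ 2

/-- `-x log₂ x` (with the convention `0 log₂ 0 = 0`). -/
noncomputable def ent2 (x : ℝ) : ℝ := -(x * Real.logb 2 x)

/-- A POVM on `ℂ^M` with finite outcome set `A`. -/
structure POVM (A : Type*) [Fintype A] (M : ℕ) where
  X : A → Matrix (Fin M) (Fin M) ℂ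
  posSemidef : ∀ a : A, (X a).PosSemidef
  sum_one : ∑ a : A, X a = 1

/-- Eve's outcome probability `p(α|i)`. -/
noncomputable def pOut {N M : ℕ} {A : Type*} [Fintype A]
    (E : Bits N → Bits N → EuclideanSpace ℂ (Fin M)) (P : POVM A M) (a : A) (i : Bits N) : ℝ :=
  (∑ j : Bits N, ⟪E i j, Matrix.toEuclideanLin (P.X a) (E i j)⟫).re

/-- (base-2) Shannon mutual information of a joint distribution. -/
noncomputable def mutualInfo {S T : Type*} [Fintype S] [Fintype T] (p : S → T → ℝ) : ℝ :=
  (∑ s, ent2 (∑ t, p s t)) + (∑ t, ent2 (∑ s, p s t)) - ∑ s, ∑ t, ent2 (p s t)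

/-- Eve's information gain `I(A:E[X]|b)`. -/
noncomputable def infoGain {N M : ℕ} {A : Type*} [Fintype A]
    (E : Bits N → Bits N → EuclideanSpace ℂ (Fin M)) (P : POVM A M) : ℝ :=
  mutualInfo (fun (i : Bits N) (a : A) => (2 ^ N : ℝ)⁻¹ * pOut E P a i)

/-- Elementary tensor of two Euclidean-space vectors. -/
noncomputable def tens {α β : Type*} (u : EuclideanSpace ℂ α) (v : EuclideanSpace ℂ β) :
    EuclideanSpace ℂ (α × β) :=
  (WithLp.equiv 2 ((α × β) → ℂ)).symm (fun p => u p.1 * v p.2)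

/-- Symmetrized attack vectors. -/
noncomputable def Es {N M : ℕ} (E : Bits N → Bits N → EuclideanSpace ℂ (Fin M))
    (i j : Bits N) : EuclideanSpace ℂ (Bits N × Fin M) :=
  (((Real.sqrt (2 ^ N))⁻¹ : ℝ) : ℂ) •
    ∑ m : Bits N, ((-1 : ℂ) ^ bdot m (i + j)) • tens (EuclideanSpace.single m 1) (E (i + m) (j + m))

/-- The operator `|e_m⟩⟨e_m| ⊗ X` as a matrix on `ℂ^{2^N} ⊗ ℂ^M`. -/
def projTens {N M : ℕ} (m : Bits N) (X : Matrix (Fin M) (Fin M) ℂ) :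
    Matrix (Bits N × Fin M) (Bits N × Fin M) ℂ :=
  Matrix.of fun p q => (if p.1 = m ∧ q.1 = m then 1 else 0) * X p.2 q.2

/-- Purification vectors `φ_i`. -/
noncomputable def phi {N M : ℕ} (E : Bits N → Bits N → EuclideanSpace ℂ (Fin M))
    (i : Bits N) : EuclideanSpace ℂ ((Bits N × Fin M) × Bits N) :=
  ∑ j : Bits N, tens (Es E i j) (EuclideanSpace.single (i + j) 1)

/-- Rank-one projection `|ψ⟩⟨ψ|` as a matrix. -/
noncomputable def outer {α : Type*} (ψ : EuclideanSpace ℂ α) : Matrix α α ℂ :=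
  Matrix.of fun x y => ψ x * star (ψ y)

/-- Partial trace over the second tensor factor. -/
noncomputable def ptraceSnd {α β : Type*} [Fintype β] (Θ : Matrix (α × β) (α × β) ℂ) : Matrix α α ℂ :=
  Matrix.of fun i j => ∑ b : β, Θ (i, b) (j, b)

/-- Partial trace over the first tensor factor. -/
noncomputable def ptraceFst {α β : Type*} [Fintype α] (Θ : Matrix (α × β) (α × β) ℂ) : Matrix β β ℂ :=
  Matrix.of fun x y => ∑ a : α, Θ (a, x) (a, y)

-- von Neumann entropy (base 2) of a Hermitian matrix (junk value `0` otherwise).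
open Classical in
noncomputable def vN {n : Type*} [Fintype n] [DecidableEq n] (ρ : Matrix n n ℂ) : ℝ :=
  if h : ρ.IsHermitian then ∑ i, ent2 (h.eigenvalues i) else 0

/-- Classical–quantum state `∑ i p_i |e_i⟩⟨e_i| ⊗ ρ_i`. -/
def cqState {F G : Type*} [DecidableEq F] (p : F → ℝ) (ρ : F → Matrix G G ℂ) :
    Matrix (F × G) (F × G) ℂ :=
  Matrix.of fun x y => if x.1 = y.1 then (p x.1 : ℂ) * ρ x.1 x.2 y.2 else 0

/-! ### Binary entropy and a parabola -/

/-- The parabola bound for binary entropy. The difference `g` of the two sides vanishes at `0`,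
is concave up to an inflection point `r < 1/2`, and on `[r, 1 - r]` it is convex and symmetric
about `1/2`, where it also vanishes. -/
theorem four_log_two_mul_le_binEntropy {x : ℝ} (h0 : 0 ≤ x) (h1 : x ≤ 1) :
    4 * Real.log 2 * (x * (1 - x)) ≤ Real.binEntropy x := by
  wlog hx : x ≤ 1 / 2 generalizing x
  · have := this (x := 1 - x) (by linarith) (by linarith) (by linarith)
    rw [Real.binEntropy_one_sub] at this
    linarith
  have hl : (1 : ℝ) / 2 < Real.log 2 := by have := Real.log_two_gt_d9; linarith
  set L := Real.log 2 with hL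
  set g : ℝ → ℝ := fun x => Real.binEntropy x - 4 * L * (x * (1 - x)) with hg
  suffices 0 ≤ g x by simp only [hg] at this; linarith
  have hgc : Continuous g := by fun_prop
  have hd1 : ∀ y : ℝ, 0 < y → y < 1 → HasDerivAt g
      (Real.log (1 - y) - Real.log y - 4 * L * (1 - 2 * y)) y := by
    intro y hy0 hy1
    have h := (Real.hasDerivAt_binEntropy hy0.ne' hy1.ne).sub
      (((hasDerivAt_id y).mul ((hasDerivAt_const y (1 : ℝ)).sub (hasDerivAt_id y))).const_mul (4 * L))
    refine h.congr_deriv ?_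
    simp only [Pi.sub_apply, id]; ring
  have hd2 : ∀ y : ℝ, 0 < y → y < 1 → HasDerivAt
      (fun y => Real.log (1 - y) - Real.log y - 4 * L * (1 - 2 * y))
      (8 * L - 1 / (y * (1 - y))) y := by
    intro y hy0 hy1
    have e1 := ((hasDerivAt_const y (1 : ℝ)).sub (hasDerivAt_id y)).log (by simp; linarith)
    have e2 := (hasDerivAt_id y).log (by simpa using hy0.ne')
    have e3 := (((hasDerivAt_const y (1 : ℝ)).sub ((hasDerivAt_id y).const_mul 2))).const_mul (4 * L)
    have h := (e1.sub e2).sub e3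
    refine h.congr_deriv ?_
    have : 1 - y ≠ 0 := by linarith
    simp; field_simp; ring
  -- `r` is the inflection point of `g` in `(0, 1/2)`.
  set s := Real.sqrt (1 - 1 / (2 * L)) with hs
  have hnn : 0 ≤ 1 - 1 / (2 * L) := by
    rw [sub_nonneg, div_le_one (by linarith)]; linarith
  have hs2 : s ^ 2 = 1 - 1 / (2 * L) := Real.sq_sqrt hnn
  have hs0 : 0 ≤ s := Real.sqrt_nonneg _
  have hLs : 2 * L * (1 - s ^ 2) = 1 := by rw [hs2]; field_simp; ring
  have hs1 : s < 1 := by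
    by_contra! h
    have := mul_nonneg (by linarith : 0 ≤ 2 * L) (by nlinarith : 0 ≤ s ^ 2 - 1)
    linarith
  set r := (1 - s) / 2 with hr
  have hr0 : 0 < r := by rw [hr]; linarith
  have hrr : 8 * L * (r * (1 - r)) = 1 := by rw [hr]; linear_combination hLs
  have mid : ∀ y ∈ Set.Icc r (1 - r), 0 ≤ g y := by
    have hc : ConvexOn ℝ (Set.Icc r (1 - r)) g := by
      refine convexOn_of_hasDerivWithinAt2_nonneg (convex_Icc _ _) hgc.continuousOn
        (f' := fun y => Real.log (1 - y) - Real.log y - 4 * L * (1 - 2 * y))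
        (f'' := fun y => 8 * L - 1 / (y * (1 - y))) ?_ ?_ ?_ <;>
        intro y hy <;> rw [interior_Icc] at hy <;> obtain ⟨hy1, hy2⟩ := hy
      · exact (hd1 y (by linarith) (by linarith)).hasDerivWithinAt
      · exact (hd2 y (by linarith) (by linarith)).hasDerivWithinAt
      · have h1 : 0 < y * (1 - y) := mul_pos (by linarith) (by linarith)
        rw [sub_nonneg, div_le_iff₀ h1, ← hrr]
        refine mul_le_mul_of_nonneg_left ?_ (by linarith)
        nlinarith [mul_pos (sub_pos.2 hy1) (sub_pos.2 hy2)]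
    intro y hy
    have hy' : 1 - y ∈ Set.Icc r (1 - r) := ⟨by linarith [hy.2], by linarith [hy.1]⟩
    -- By symmetry and convexity, `g y` is the mean of `g y` and `g (1 - y)`, so at least `g (1/2)`.
    have h := hc.2 hy hy' (by norm_num : (0 : ℝ) ≤ 1 / 2) (by norm_num : (0 : ℝ) ≤ 1 / 2)
      (by norm_num)
    have e1 : g (1 - y) = g y := by simp only [hg, Real.binEntropy_one_sub]; ring
    have e2 : g (1 / 2) = 0 := by
      simp only [hg, one_div, Real.binEntropy_two_inv]; rw [← hL]; ring
    have e3 : (1 / 2 : ℝ) • y + (1 / 2 : ℝ) • (1 - y) = 1 / 2 := by simp; ring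
    rw [e3, e1, e2] at h
    simp only [smul_eq_mul] at h
    linarith
  by_cases hxr : r ≤ x
  · exact mid x ⟨hxr, by rw [hr] at *; linarith⟩
  have hc : ConcaveOn ℝ (Set.Icc 0 r) g := by
    refine concaveOn_of_hasDerivWithinAt2_nonpos (convex_Icc _ _) hgc.continuousOn
      (f' := fun y => Real.log (1 - y) - Real.log y - 4 * L * (1 - 2 * y))
      (f'' := fun y => 8 * L - 1 / (y * (1 - y))) ?_ ?_ ?_ <;>
      intro y hy <;> rw [interior_Icc] at hy <;> obtain ⟨hy1, hy2⟩ := hy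
    · exact (hd1 y (by linarith) (by linarith)).hasDerivWithinAt
    · exact (hd2 y (by linarith) (by linarith)).hasDerivWithinAt
    · have h1 : 0 < y * (1 - y) := mul_pos (by linarith) (by linarith)
      rw [sub_nonpos, le_div_iff₀ h1, ← hrr]
      refine mul_le_mul_of_nonneg_left ?_ (by linarith)
      nlinarith [mul_pos (sub_pos.2 hy2) (by linarith : 0 < 1 - r - y)]
  have g0 : g 0 = 0 := by simp [hg]
  have gr : 0 ≤ g r := mid r ⟨le_rfl, by linarith⟩
  have h := hc.min_le_of_mem_Icc (x := 0) (y := r) (z := x) ⟨le_rfl, hr0.le⟩ ⟨hr0.le, le_rfl⟩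
    ⟨h0, by linarith⟩
  rw [g0, min_eq_left gr] at h
  exact h

/-! ### Unnormalised entropy -/

/-- Shannon entropy in nats, extended to nonnegative families of arbitrary total mass `Q` as
`Q` times the entropy of the normalised family: `Φ(q) = -∑ q_s log (q_s / Q)`. -/
noncomputable def Phi {S : Type*} [Fintype S] (q : S → ℝ) : ℝ :=
  ∑ s, Real.negMulLog (q s) - Real.negMulLog (∑ s, q s)

theorem Phi_smul {S : Type*} [Fintype S] (t : ℝ) (q : S → ℝ) :
    Phi (fun s => t * q s) = t * Phi q := by
  simp only [Phi, ← Finset.mul_sum, Real.negMulLog_mul, Finset.sum_add_distrib, ← Finset.sum_mul]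
  ring

/-- Chain rule: joint entropy is marginal entropy plus conditional entropy. -/
theorem Phi_prod {S T : Type*} [Fintype S] [Fintype T] (q : S → T → ℝ) :
    Phi (fun x : S × T => q x.1 x.2) = Phi (fun s => ∑ t, q s t) + ∑ s, Phi (q s) := by
  simp only [Phi, Fintype.sum_prod_type, Finset.sum_sub_distrib]
  ring

theorem Phi_equiv {S T : Type*} [Fintype S] [Fintype T] (e : S ≃ T) (q : T → ℝ) :
    Phi (fun s => q (e s)) = Phi q := by
  simp only [Phi]
  rw [e.sum_comp (fun t => Real.negMulLog (q t)), e.sum_comp q]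

/-- One term of the log-sum inequality, `a log (b / a) ≤ a log (B / A) + (b A / B - a)`, with the
logarithms split. The hypothesis `a ≤ b` serves to exclude `b = 0 < a`. -/
theorem log_sum_aux {a b A B : ℝ} (ha : 0 ≤ a) (hab : a ≤ b) (hA : 0 < A) (hB : 0 < B) :
    Real.negMulLog a + a * Real.log b ≤
      a * (Real.log B - Real.log A) + (b * (A / B) - a) := by
  rcases ha.eq_or_lt with rfl | ha
  · simp; positivity
  have hb : 0 < b := ha.trans_le hab
  have h := Real.log_le_sub_one_of_pos (x := b * A / (a * B)) (by positivity)
  rw [Real.log_div (by positivity) (by positivity), Real.log_mul hb.ne' hA.ne',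
    Real.log_mul ha.ne' hB.ne'] at h
  have h2 := mul_le_mul_of_nonneg_left h ha.le
  have h3 : a * (b * A / (a * B) - 1) = b * (A / B) - a := by field_simp
  rw [h3] at h2
  simp only [Real.negMulLog]
  linarith

/-- Concavity of entropy: `Phi`, being homogeneous of degree one, is superadditive. -/
theorem sum_Phi_le {S K : Type*} [Fintype S] [Fintype K] (q : K → S → ℝ)
    (hq : ∀ k s, 0 ≤ q k s) : ∑ k, Phi (q k) ≤ Phi (fun s => ∑ k, q k s) := by
  have hPhi : ∀ q : S → ℝ, Phi q = ∑ s, (Real.negMulLog (q s) + q s * Real.log (∑ s, q s)) := by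
    intro q
    simp only [Phi, Finset.sum_add_distrib, ← Finset.sum_mul]
    simp only [Real.negMulLog]; ring
  simp only [hPhi]
  rw [Finset.sum_comm]
  refine Finset.sum_le_sum fun s _ => ?_
  rw [Finset.sum_comm]
  set B := ∑ k, ∑ s, q k s with hB
  set A := ∑ k, q k s with hA
  have hA0 : 0 ≤ A := Finset.sum_nonneg fun k _ => hq k s
  rcases hA0.eq_or_lt with h0 | hApos
  · have : ∀ k, q k s = 0 := fun k =>
      (Finset.sum_eq_zero_iff_of_nonneg (fun k _ => hq k s)).1 h0.symm k (Finset.mem_univ _)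
    simp [this, ← h0]
  have hle : ∀ k, q k s ≤ ∑ s, q k s := fun k =>
    Finset.single_le_sum (fun s _ => hq k s) (Finset.mem_univ s)
  have hBpos : 0 < B := hApos.trans_le (Finset.sum_le_sum fun k _ => hle k)
  refine (Finset.sum_le_sum fun k _ =>
    log_sum_aux (hq k s) (hle k) hApos hBpos).trans ?_
  rw [Finset.sum_add_distrib, Finset.sum_sub_distrib, ← Finset.sum_mul, ← Finset.sum_mul,
    ← hA, ← hB]
  simp only [Real.negMulLog]
  have : B * (A / B) = A := by field_simp
  rw [this]; linarith

/-! ### The uncertainty relation for one qubit -/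

/-- The parabola bound in homogeneous form. -/
theorem two_point_quad {p s : ℝ} (hp : 0 ≤ p) (hs : 0 ≤ s) (h : 0 < p + s) :
    4 * Real.log 2 * (p * s) / (p + s) ≤
      Real.negMulLog p + Real.negMulLog s - Real.negMulLog (p + s) := by
  have h1 := four_log_two_mul_le_binEntropy (x := p / (p + s)) (by positivity)
    (by rw [div_le_one h]; linarith)
  rw [Real.binEntropy_eq_negMulLog_add_negMulLog_one_sub] at h1
  have e : 1 - p / (p + s) = s / (p + s) := by field_simp; ring
  rw [e] at h1
  have h2 := Phi_smul (p + s) ![p / (p + s), s / (p + s)]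
  simp only [Phi, Fin.sum_univ_two, Matrix.cons_val_zero, Matrix.cons_val_one] at h2
  have e1 : (p + s) * (p / (p + s)) = p := by field_simp
  have e2 : (p + s) * (s / (p + s)) = s := by field_simp
  have e3 : p / (p + s) + s / (p + s) = 1 := by field_simp
  rw [e1, e2, e3, Real.negMulLog_one, sub_zero] at h2
  rw [h2]
  calc _ = (p + s) * (4 * Real.log 2 * (p / (p + s) * (s / (p + s)))) := by field_simp
    _ ≤ _ := mul_le_mul_of_nonneg_left h1 h.le

/-- Entropic uncertainty relation for one qubit. After the parabola bound it reduces to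
`(‖a‖² + ‖b‖²)² ≤ 4‖a‖²‖b‖² + ‖a + b‖²‖a - b‖²`, which is Cauchy–Schwarz for `Re ⟪a, b⟫`. -/
theorem two_point (a b : ℂ) :
    Real.log 2 * (‖a‖ ^ 2 + ‖b‖ ^ 2) ≤
      (Real.negMulLog (‖a‖ ^ 2) + Real.negMulLog (‖b‖ ^ 2) - Real.negMulLog (‖a‖ ^ 2 + ‖b‖ ^ 2)) +
      (Real.negMulLog (2⁻¹ * ‖a + b‖ ^ 2) + Real.negMulLog (2⁻¹ * ‖a - b‖ ^ 2) -
        Real.negMulLog (2⁻¹ * ‖a + b‖ ^ 2 + 2⁻¹ * ‖a - b‖ ^ 2)) := by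
  have hpar : 2⁻¹ * ‖a + b‖ ^ 2 + 2⁻¹ * ‖a - b‖ ^ 2 = ‖a‖ ^ 2 + ‖b‖ ^ 2 := by
    have := parallelogram_law_with_norm ℝ a b
    nlinarith
  have h0 : 0 ≤ ‖a‖ ^ 2 + ‖b‖ ^ 2 := by positivity
  rcases h0.eq_or_lt with h0 | h0
  · have ha : a = 0 := by
      have : ‖a‖ ^ 2 = 0 := by nlinarith [sq_nonneg ‖a‖, sq_nonneg ‖b‖]
      simpa using this
    have hb : b = 0 := by
      have : ‖b‖ ^ 2 = 0 := by nlinarith [sq_nonneg ‖a‖, sq_nonneg ‖b‖]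
      simpa using this
    simp [ha, hb]
  have q1 := two_point_quad (sq_nonneg ‖a‖) (sq_nonneg ‖b‖) h0
  have q2 := two_point_quad (p := 2⁻¹ * ‖a + b‖ ^ 2) (s := 2⁻¹ * ‖a - b‖ ^ 2) (by positivity)
    (by positivity) (by rwa [hpar])
  refine le_trans ?_ (add_le_add q1 q2)
  rw [hpar, ← add_div, le_div_iff₀ h0]
  have hl : 0 < Real.log 2 := Real.log_pos (by norm_num)
  have ei : ‖a + b‖ ^ 2 = ‖a‖ ^ 2 + 2 * inner ℝ a b + ‖b‖ ^ 2 := norm_add_sq_real a b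
  have ei' : ‖a - b‖ ^ 2 = ‖a‖ ^ 2 - 2 * inner ℝ a b + ‖b‖ ^ 2 := norm_sub_sq_real a b
  have cs : (inner ℝ a b : ℝ) ^ 2 ≤ ‖a‖ ^ 2 * ‖b‖ ^ 2 := by
    rw [← mul_pow, sq_le_sq, abs_of_nonneg (by positivity : 0 ≤ ‖a‖ * ‖b‖)]
    exact abs_real_inner_le_norm a b
  rw [ei, ei']
  have : (‖a‖ ^ 2 + ‖b‖ ^ 2) * (‖a‖ ^ 2 + ‖b‖ ^ 2) ≤ 4 * (‖a‖ ^ 2 * ‖b‖ ^ 2) +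
    4 * (2⁻¹ * (‖a‖ ^ 2 + 2 * inner ℝ a b + ‖b‖ ^ 2) *
      (2⁻¹ * (‖a‖ ^ 2 - 2 * inner ℝ a b + ‖b‖ ^ 2))) := by nlinarith
  nlinarith [mul_le_mul_of_nonneg_left this hl.le]

/-! ### The Walsh–Hadamard transform -/

section Hadamard

variable {V : Type*} [NormedAddCommGroup V] [InnerProductSpace ℂ V]

/-- The Walsh–Hadamard transform on `ℤ₂^N`, for vector-valued functions and without the
normalising factor `2^{-N/2}`. -/
noncomputable def had {N : ℕ} (v : Bits N → V) (c : Bits N) : V :=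
  ∑ i, (-1 : ℂ) ^ bdot c i • v i

theorem bdot_cons {N : ℕ} (a b : ZMod 2) (k l : Bits N) :
    bdot (Fin.cons a k : Bits (N + 1)) (Fin.cons b l : Bits (N + 1)) =
      a.val * b.val + bdot k l := by
  simp [bdot, Fin.sum_univ_succ]

theorem bdot_comm {N : ℕ} (k l : Bits N) : bdot k l = bdot l k := by
  simp [bdot, mul_comm]

theorem sign_add_left {N : ℕ} (a b c : Bits N) :
    (-1 : ℂ) ^ bdot (a + b) c = (-1) ^ bdot a c * (-1) ^ bdot b c := by
  simp only [bdot, ← Finset.prod_pow_eq_pow_sum, ← Finset.prod_mul_distrib]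
  refine Finset.prod_congr rfl fun n _ => ?_
  have key : ∀ x y z : ZMod 2, (-1 : ℂ) ^ ((x + y).val * z.val) =
      (-1) ^ (x.val * z.val) * (-1) ^ (y.val * z.val) := by
    intro x y z
    have h : ∀ x y z : ZMod 2, ((x + y).val * z.val) % 2 = (x.val * z.val + y.val * z.val) % 2 := by
      decide
    rw [← pow_add, neg_one_pow_eq_pow_mod_two, h, ← neg_one_pow_eq_pow_mod_two]
  exact key _ _ _

theorem sign_add_right {N : ℕ} (a b c : Bits N) :
    (-1 : ℂ) ^ bdot c (a + b) = (-1) ^ bdot c a * (-1) ^ bdot c b := by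
  rw [bdot_comm, sign_add_left, bdot_comm a, bdot_comm b]

theorem sign_mul_self {N : ℕ} (a b : Bits N) :
    (-1 : ℂ) ^ bdot a b * (-1 : ℂ) ^ bdot a b = 1 := by
  rw [← mul_pow]; simp

theorem sum_bits_succ {β : Type*} [AddCommMonoid β] {N : ℕ} (f : Bits (N + 1) → β) :
    ∑ c, f c = ∑ a : ZMod 2, ∑ c : Bits N, f (Fin.cons a c) := by
  rw [← (Fin.consEquiv (fun _ : Fin (N + 1) => ZMod 2)).sum_comp, Fintype.sum_prod_type]
  rfl

theorem sum_zmod_two {β : Type*} [AddCommMonoid β] (f : ZMod 2 → β) : ∑ a, f a = f 0 + f 1 :=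
  Fin.sum_univ_two f

/-- The transform on `N + 1` bits: one butterfly step in the first bit, then the transform in the
others. -/
theorem had_cons {N : ℕ} (v : Bits (N + 1) → V) (a : ZMod 2) (c : Bits N) :
    had v (Fin.cons a c) =
      had (fun i => v (Fin.cons 0 i) + (-1 : ℂ) ^ a.val • v (Fin.cons 1 i)) c := by
  simp only [had, sum_bits_succ, bdot_cons, sum_zmod_two, smul_add, smul_smul,
    Finset.sum_add_distrib, pow_add, ZMod.val_zero, ZMod.val_one, zero_mul, pow_zero,
    one_mul, mul_comm]

theorem parallelogram (x y : V) : ‖x + y‖ ^ 2 + ‖x - y‖ ^ 2 = 2 * (‖x‖ ^ 2 + ‖y‖ ^ 2) := by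
  exact parallelogram_law_with_norm ℂ x y

theorem parseval : ∀ {N : ℕ} (v : Bits N → V),
    ∑ c, ‖had v c‖ ^ 2 = 2 ^ N * ∑ i, ‖v i‖ ^ 2
  | 0, v => by simp [had, bdot]
  | N + 1, v => by
    have ih : ∀ w : Bits N → V, ∑ c, ‖had w c‖ ^ 2 = 2 ^ N * ∑ i, ‖w i‖ ^ 2 :=
      fun w => parseval w
    simp only [sum_bits_succ, had_cons, ih, sum_zmod_two]
    rw [← mul_add, ← Finset.sum_add_distrib]
    simp only [ZMod.val_zero, ZMod.val_one, pow_zero, pow_one, one_smul, neg_smul,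
      ← sub_eq_add_neg, parallelogram]
    rw [← Finset.mul_sum, Finset.sum_add_distrib]
    ring

end Hadamard

/-! ### Hirschman's inequality -/

/-- Chain rule conditioning on the first bit. -/
theorem Phi_cons {N : ℕ} (q : Bits (N + 1) → ℝ) :
    Phi q = Phi (fun a => ∑ j, q (Fin.cons a j)) + ∑ a, Phi (fun j : Bits N => q (Fin.cons a j)) := by
  rw [← Phi_equiv (Fin.consEquiv (fun _ : Fin (N + 1) => ZMod 2)) q]
  exact Phi_prod (fun (a : ZMod 2) (j : Bits N) => q (Fin.cons a j))

/-- Chain rule conditioning on all bits but the first. -/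
theorem Phi_cons' {N : ℕ} (q : Bits (N + 1) → ℝ) :
    Phi q = Phi (fun j : Bits N => ∑ a, q (Fin.cons a j)) +
      ∑ j : Bits N, Phi (fun a => q (Fin.cons a j)) := by
  rw [← Phi_equiv ((Equiv.prodComm _ _).trans (Fin.consEquiv (fun _ : Fin (N + 1) => ZMod 2))) q]
  exact Phi_prod (fun (j : Bits N) (a : ZMod 2) => q (Fin.cons a j))

/-- Hirschman's entropic uncertainty principle on `ℤ₂^N`, by induction on `N`. With `w` the
function transformed in the first bit only, the entropy of `‖v‖²` is expanded conditioning on the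
last `N` bits and that of the transform conditioning on the first bit. The two marginals occurring
in these expansions are also marginals of `‖w‖² / 2`, so concavity bounds each below by a
conditional entropy of `‖w‖² / 2`; what is left is the qubit inequality for every value of the last
`N` bits and the induction hypothesis for every value of the first bit. -/
theorem hirschman : ∀ {N : ℕ} (v : Bits N → ℂ),
    Real.log 2 * N * ∑ i, ‖v i‖ ^ 2 ≤
      Phi (fun i => ‖v i‖ ^ 2) + Phi (fun c => (2 ^ N : ℝ)⁻¹ * ‖had v c‖ ^ 2)
  | 0, v => by simp [Phi]
  | N + 1, v => by
    set w : ZMod 2 → Bits N → ℂ :=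
      fun a j => v (Fin.cons 0 j) + (-1 : ℂ) ^ a.val • v (Fin.cons 1 j) with hw
    have w0 : ∀ j, w 0 j = v (Fin.cons 0 j) + v (Fin.cons 1 j) := by intro j; simp [hw]
    have w1 : ∀ j, w 1 j = v (Fin.cons 0 j) - v (Fin.cons 1 j) := by
      intro j; simp [hw, ZMod.val_one, sub_eq_add_neg]
    have hpar : ∀ j, ∑ a, 2⁻¹ * ‖w a j‖ ^ 2 = ∑ a, ‖v (Fin.cons a j)‖ ^ 2 := by
      intro j
      rw [sum_zmod_two, sum_zmod_two, w0, w1]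
      have := parallelogram (v (Fin.cons 0 j)) (v (Fin.cons 1 j))
      linarith
    have hhalf : ((2 : ℝ) ^ (N + 1))⁻¹ = 2⁻¹ * (2 ^ N)⁻¹ := by rw [pow_succ]; ring
    rw [Phi_cons' (fun i => ‖v i‖ ^ 2), Phi_cons (fun c => ((2 : ℝ) ^ (N + 1))⁻¹ * ‖had v c‖ ^ 2)]
    simp only [had_cons]
    have hmarg : (fun a : ZMod 2 => ∑ j, ((2 : ℝ) ^ (N + 1))⁻¹ * ‖had (w a) j‖ ^ 2) =
        fun a => ∑ j, 2⁻¹ * ‖w a j‖ ^ 2 := by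
      funext a
      rw [← Finset.mul_sum, parseval, ← Finset.mul_sum, hhalf]
      field_simp
    have hmarg2 : (fun j : Bits N => ∑ a, ‖v (Fin.cons a j)‖ ^ 2) =
        fun j => ∑ a, 2⁻¹ * ‖w a j‖ ^ 2 := funext fun j => (hpar j).symm
    have s1 := sum_Phi_le (fun (a : ZMod 2) (j : Bits N) => 2⁻¹ * ‖w a j‖ ^ 2)
      (fun _ _ => by positivity)
    have s2 := sum_Phi_le (fun (j : Bits N) (a : ZMod 2) => 2⁻¹ * ‖w a j‖ ^ 2)
      (fun _ _ => by positivity)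
    have t1 : Real.log 2 * N * ∑ i, ‖v i‖ ^ 2 ≤
        ∑ a, Phi (fun j => 2⁻¹ * ‖w a j‖ ^ 2) +
        ∑ a, Phi (fun j => ((2 : ℝ) ^ (N + 1))⁻¹ * ‖had (w a) j‖ ^ 2) := by
      rw [sum_bits_succ, Finset.sum_comm, ← Finset.sum_add_distrib]
      simp only [← hpar]
      rw [Finset.sum_comm, Finset.mul_sum]
      refine Finset.sum_le_sum fun a _ => ?_
      have ih := mul_le_mul_of_nonneg_left (hirschman (w a)) (by norm_num : (0 : ℝ) ≤ 2⁻¹)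
      rw [mul_add, ← Phi_smul, ← Phi_smul] at ih
      simp only [hhalf, mul_assoc, ← Finset.mul_sum] at ih ⊢
      linarith
    have t2 : Real.log 2 * ∑ i, ‖v i‖ ^ 2 ≤
        ∑ j : Bits N, Phi (fun a => ‖v (Fin.cons a j)‖ ^ 2) +
        ∑ j : Bits N, Phi (fun a => 2⁻¹ * ‖w a j‖ ^ 2) := by
      rw [sum_bits_succ, Finset.sum_comm, ← Finset.sum_add_distrib, Finset.mul_sum]
      refine Finset.sum_le_sum fun j _ => ?_
      simp only [Phi, sum_zmod_two, w0, w1]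
      exact two_point _ _
    rw [hmarg2]
    have hmarg' := congrArg Phi hmarg
    simp only [hw] at hmarg' s1 s2 t1 t2 ⊢
    rw [hmarg']
    push_cast
    linarith

/-! ### Fano's inequality -/

theorem card_bits (N : ℕ) : ((Fintype.card (Bits N) : ℕ) : ℝ) = 2 ^ N := by
  simp [ZMod.card]

/-- Fano's inequality for the event `c ≠ 0`, with `log 2^N` in place of `log (2^N - 1)`. -/
theorem fano {N : ℕ} (p : Bits N → ℝ) (hp : ∀ c, 0 ≤ p c) (hsum : ∑ c, p c = 1) {δ : ℝ}
    (hδ : δ = ∑ c ∈ Finset.univ.filter (fun c : Bits N => c ≠ 0), p c) :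
    Phi p ≤ Real.negMulLog δ + Real.negMulLog (1 - δ) + N * Real.log 2 * δ := by
  have hsplit : ∀ f : Bits N → ℝ,
      ∑ c, f c = f 0 + ∑ c ∈ Finset.univ.filter (fun c : Bits N => c ≠ 0), f c := by
    intro f
    rw [← Finset.sum_filter_add_sum_filter_not _ (fun c : Bits N => c = 0)]
    simp [Finset.filter_eq']
  have hp0 : p 0 = 1 - δ := by rw [hsplit, ← hδ] at hsum; linarith
  have hp1 : ∀ c, p c ≤ 1 := fun c => hsum ▸
    Finset.single_le_sum (fun s _ => hp s) (Finset.mem_univ c)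
  rw [Phi, hsum, Real.negMulLog_one, hsplit, hp0]
  have hδ0 : 0 ≤ δ := hδ ▸ Finset.sum_nonneg fun c _ => hp c
  suffices ∑ c ∈ Finset.univ.filter (fun c : Bits N => c ≠ 0), Real.negMulLog (p c) ≤
      Real.negMulLog δ + N * Real.log 2 * δ by linarith
  rcases hδ0.eq_or_lt with h0 | hpos
  · rw [Finset.sum_eq_zero]
    · simp [← h0]
    · intro c hc
      rw [(Finset.sum_eq_zero_iff_of_nonneg (fun k _ => hp k)).1 (hδ.symm.trans h0.symm) c hc]
      simp
  have h2 : (0 : ℝ) < 2 ^ N := by positivity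
  have hle := Finset.sum_le_sum fun c (_ : c ∈ Finset.univ.filter (fun c : Bits N => c ≠ 0)) =>
    log_sum_aux (hp c) (hp1 c) hpos h2
  simp only [Real.log_one, mul_zero, add_zero, Real.log_pow, one_mul] at hle
  rw [Finset.sum_add_distrib, Finset.sum_sub_distrib, ← Finset.sum_mul, ← hδ,
    Finset.sum_const, nsmul_eq_mul] at hle
  have hcard : ((Finset.univ.filter (fun c : Bits N => c ≠ 0)).card : ℝ) ≤ 2 ^ N := by
    rw [← card_bits]
    exact_mod_cast Finset.card_le_univ _
  have h3 : ((Finset.univ.filter (fun c : Bits N => c ≠ 0)).card : ℝ) * (δ / 2 ^ N) ≤ δ := by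
    calc _ ≤ 2 ^ N * (δ / 2 ^ N) := mul_le_mul_of_nonneg_right hcard (by positivity)
      _ = δ := by field_simp
  simp only [Real.negMulLog] at hle ⊢
  linarith

/-! ### Eve's and Bob's distributions -/

open scoped MatrixOrder in
/-- A positive semidefinite matrix factors as `T* T`, so its quadratic form is `‖T u‖²`. -/
theorem exists_kraus {M : ℕ} {X : Matrix (Fin M) (Fin M) ℂ} (hX : X.PosSemidef) :
    ∃ T : EuclideanSpace ℂ (Fin M) →ₗ[ℂ] EuclideanSpace ℂ (Fin M),
      ∀ u, ⟪u, Matrix.toEuclideanLin X u⟫ = ((‖T u‖ ^ 2 : ℝ) : ℂ) := by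
  obtain ⟨B, rfl⟩ := CStarAlgebra.nonneg_iff_eq_star_mul_self.mp hX.nonneg
  refine ⟨Matrix.toEuclideanLin B, fun u => ?_⟩
  have h : Matrix.toEuclideanLin (star B * B) u =
      Matrix.toEuclideanLin B.conjTranspose (Matrix.toEuclideanLin B u) := by
    rw [Matrix.star_eq_conjTranspose]
    simp [Matrix.toEuclideanLin]
  rw [h, Matrix.toEuclideanLin_conjTranspose_eq_adjoint, LinearMap.adjoint_inner_right,
    inner_self_eq_norm_sq_to_K]
  simp

theorem sum_shift {β : Type*} [AddCommMonoid β] {N : ℕ} (f : Bits N → β) (i : Bits N) :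
    ∑ k, f (i + k) = ∑ j, f j :=
  Equiv.sum_comp (Equiv.addLeft i) f

/-- The conjugate vector with error `c` as a transform in `k` of the transforms in `i` of
`E i (i + k)`; the signs `(-1)^{i·l}` cancel. -/
theorem Ebar_eq {N M : ℕ} (E : Bits N → Bits N → EuclideanSpace ℂ (Fin M)) (l c : Bits N) :
    Ebar E l (l + c) = (2 ^ N : ℂ)⁻¹ •
      had (fun k => (-1 : ℂ) ^ bdot c k • had (fun i => E i (i + k)) c) l := by
  simp only [Ebar, had, Finset.smul_sum, smul_smul]
  rw [Finset.sum_comm (γ := Bits N) (f := fun k i => ((2 ^ N : ℂ)⁻¹ * _) • E i (i + k))]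
  refine Finset.sum_congr rfl fun i _ => ?_
  rw [← sum_shift _ i]
  refine Finset.sum_congr rfl fun k _ => ?_
  congr 2
  rw [pow_add, sign_add_left, sign_add_right, sign_add_right, bdot_comm i l]
  linear_combination ((-1 : ℂ) ^ bdot l k * (-1) ^ bdot c i * (-1) ^ bdot c k) * sign_mul_self l i

/-- Bob's conjugate-basis error is the transform of the first register once the second one is
replaced by `k = i ⊕ j`: Parseval in `l` removes the outer transform in `Ebar_eq`. -/
theorem pbar_eq {N M : ℕ} (E : Bits N → Bits N → EuclideanSpace ℂ (Fin M)) (c : Bits N) :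
    pbar E c = (2 ^ N : ℝ)⁻¹ *
      ∑ k, (2 ^ N : ℝ)⁻¹ * ‖had (fun i => E i (i + k)) c‖ ^ 2 := by
  have hn : ∀ (n : ℕ) (x : EuclideanSpace ℂ (Fin M)), ‖((-1 : ℂ) ^ n) • x‖ = ‖x‖ := by
    intro n x; simp [norm_smul]
  simp only [pbar, Ebar_eq, norm_smul, mul_pow]
  rw [← Finset.mul_sum, parseval, ← Finset.mul_sum]
  simp only [hn]
  simp
  field_simp

theorem had_map {N M : ℕ} (T : EuclideanSpace ℂ (Fin M) →ₗ[ℂ] EuclideanSpace ℂ (Fin M))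
    (w : Bits N → EuclideanSpace ℂ (Fin M)) (c : Bits N) (m : Fin M) :
    T (had w c) m = had (fun i => T (w i) m) c := by
  simp [had, map_sum]

/-- Eve's information is at most the entropy of Bob's conjugate-basis error distribution. -/
theorem info_le {N M : ℕ} {A : Type*} [Fintype A]
    (E : Bits N → Bits N → EuclideanSpace ℂ (Fin M)) (hE : Attack E) (P : POVM A M) :
    infoGain E P * Real.log 2 ≤ Phi (pbar E) ∧ ∑ c, pbar E c = 1 := by
  choose T hT using fun a => exists_kraus (P.posSemidef a)
  have h2 : (0 : ℝ) < 2 ^ N := by positivity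
  have hTn : ∀ u, ∑ a, ∑ m, ‖T a u m‖ ^ 2 = ‖u‖ ^ 2 := by
    intro u
    have h : ∑ a, ⟪u, Matrix.toEuclideanLin (P.X a) u⟫ = ((‖u‖ ^ 2 : ℝ) : ℂ) := by
      rw [← inner_sum, ← LinearMap.sum_apply, ← map_sum, P.sum_one]
      simp [Matrix.toEuclideanLin]
    simp only [hT] at h
    simp only [← EuclideanSpace.norm_sq_eq]
    exact_mod_cast h
  have hEn : ∀ i, ∑ j, ‖E i j‖ ^ 2 = 1 := by
    intro i
    have h := hE i i
    simp only [if_true, inner_self_eq_norm_sq_to_K] at h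
    have h' : ((∑ j, ‖E i j‖ ^ 2 : ℝ) : ℂ) = 1 := by push_cast; exact h
    exact_mod_cast h'
  have hp : ∀ a i, pOut E P a i = ∑ x : Fin M × Bits N, ‖T a (E i (i + x.2)) x.1‖ ^ 2 := by
    intro a i
    simp only [pOut, hT]
    rw [Fintype.sum_prod_type_right, sum_shift (fun j => ∑ m, ‖T a (E i j) m‖ ^ 2) i,
      ← Complex.ofReal_sum, Complex.ofReal_re]
    simp only [← EuclideanSpace.norm_sq_eq]
  have hpsum : ∀ i, ∑ a, pOut E P a i = 1 := by
    intro i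
    simp only [hp, Fintype.sum_prod_type_right]
    rw [Finset.sum_comm]
    simp only [hTn]
    rw [sum_shift (fun j => ‖E i j‖ ^ 2) i, hEn]
  have hpb : ∀ c, pbar E c = ∑ y : A × Fin M × Bits N, (2 ^ N : ℝ)⁻¹ *
      ((2 ^ N : ℝ)⁻¹ * ‖had (fun i => T y.1 (E i (i + y.2.2)) y.2.1) c‖ ^ 2) := by
    intro c
    rw [pbar_eq, ← Finset.mul_sum, ← Finset.mul_sum, ← Finset.mul_sum, Fintype.sum_prod_type]
    simp only [Fintype.sum_prod_type_right, ← had_map]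
    rw [Finset.sum_comm]
    simp only [hTn]
  have hpbsum : ∑ c, pbar E c = 1 := by
    simp only [pbar_eq]
    rw [← Finset.mul_sum, Finset.sum_comm]
    simp only [← Finset.mul_sum, parseval]
    rw [Finset.sum_comm]
    have hs : ∀ i, ∑ k, ‖E i (i + k)‖ ^ 2 = 1 := fun i =>
      (sum_shift (fun j => ‖E i j‖ ^ 2) i).trans (hEn i)
    simp only [hs]
    simp [ZMod.card]
  refine ⟨?_, hpbsum⟩
  have hl : 0 < Real.log 2 := Real.log_pos (by norm_num)
  have hent : ∀ x, ent2 x * Real.log 2 = Real.negMulLog x := by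
    intro x; simp only [ent2, Real.logb, Real.negMulLog]; field_simp
  have hI : infoGain E P * Real.log 2 = N * Real.log 2 -
      ∑ a, Phi (fun i => (2 ^ N : ℝ)⁻¹ * pOut E P a i) := by
    simp only [infoGain, mutualInfo, sub_mul, add_mul, Finset.sum_mul, hent, Phi,
      Finset.sum_sub_distrib]
    rw [Finset.sum_comm (f := fun (i : Bits N) (a : A) => Real.negMulLog ((2 ^ N : ℝ)⁻¹ * pOut E P a i))]
    simp only [← Finset.mul_sum, hpsum, Finset.sum_const, Finset.card_univ, nsmul_eq_mul, card_bits]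
    simp only [Real.negMulLog, mul_one, Real.log_inv, Real.log_pow]
    field_simp
    ring
  rw [hI]
  -- Resolving an outcome into amplitudes labelled by `(m, k)` can only lower the entropy.
  have e1 : ∑ y : A × Fin M × Bits N,
      Phi (fun i => (2 ^ N : ℝ)⁻¹ * ‖T y.1 (E i (i + y.2.2)) y.2.1‖ ^ 2) ≤
      ∑ a, Phi (fun i => (2 ^ N : ℝ)⁻¹ * pOut E P a i) := by
    rw [Fintype.sum_prod_type]
    refine Finset.sum_le_sum fun a _ => ?_
    simp only [hp, Finset.mul_sum]
    exact sum_Phi_le (fun (x : Fin M × Bits N) i => (2 ^ N : ℝ)⁻¹ * ‖T a (E i (i + x.2)) x.1‖ ^ 2)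
      (fun _ _ => by positivity)
  have e2 : ∑ y : A × Fin M × Bits N, Phi (fun c => (2 ^ N : ℝ)⁻¹ *
      ((2 ^ N : ℝ)⁻¹ * ‖had (fun i => T y.1 (E i (i + y.2.2)) y.2.1) c‖ ^ 2)) ≤ Phi (pbar E) := by
    rw [funext hpb]
    exact sum_Phi_le _ (fun _ _ => by positivity)
  have e3 : (N : ℝ) * Real.log 2 = ∑ y : A × Fin M × Bits N, (2 ^ N : ℝ)⁻¹ *
      (Real.log 2 * N * ∑ i, ‖T y.1 (E i (i + y.2.2)) y.2.1‖ ^ 2) := by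
    rw [← Finset.mul_sum, ← Finset.mul_sum, Finset.sum_comm]
    have : ∀ i, ∑ y : A × Fin M × Bits N, ‖T y.1 (E i (i + y.2.2)) y.2.1‖ ^ 2 = 1 := by
      intro i
      rw [Fintype.sum_prod_type]
      simp only [← hp, hpsum]
    simp only [this, Finset.sum_const, Finset.card_univ, nsmul_eq_mul, card_bits]
    field_simp
  have e4 := Finset.sum_le_sum fun (y : A × Fin M × Bits N) (_ : y ∈ Finset.univ) =>
    mul_le_mul_of_nonneg_left (hirschman (fun i => T y.1 (E i (i + y.2.2)) y.2.1))
      (inv_nonneg.2 h2.le)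
  simp only [mul_add, ← Phi_smul, Finset.sum_add_distrib] at e4
  rw [← e3] at e4
  linarith

/-- Corollary: information gain versus error probability. -/
theorem info_vs_error_probability {N M : ℕ} (hN : 1 ≤ N) {A : Type*} [Fintype A]
    (E : Bits N → Bits N → EuclideanSpace ℂ (Fin M)) (hE : Attack E) (P : POVM A M)
    (δ : ℝ) (hδ : δ = ∑ c ∈ Finset.univ.filter (fun c : Bits N => c ≠ 0), pbar E c) :
    infoGain E P ≤ -(δ * Real.logb 2 δ) - (1 - δ) * Real.logb 2 (1 - δ) + N * δ := by
  obtain ⟨h, hsum⟩ := info_le E hE P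
  have hl : 0 < Real.log 2 := Real.log_pos (by norm_num)
  have hF := h.trans (fano (pbar E) (fun c => by unfold pbar; positivity) hsum hδ)
  rw [← le_div_iff₀ hl] at hF
  refine hF.trans_eq ?_
  simp only [Real.negMulLog, Real.logb]
  field_simp
  ring

end IDT
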